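/- Let w be a weight on ℝ^d (d ≥ 1) such that w^{−1/(p₀−1)} is also a weight on ℝ^d for some p₀ > 1. Let 0 < p < ∞ and let F be a subset of L^p(w). If the following three conditions hold: (i) F is bounded, i.e. sup_{f∈F} ‖f‖_{L^p(w)} < ∞; (ii) F uniformly vanishes at infinity, i.e. lim_{N→∞} sup_{f∈F} ∫_{|x|>N} |f(x)|^p w(x) dx = 0; (iii) F is uniformly equicontinuous, i.e. lim_{|h|→0} sup_{f∈F} ∫_{ℝ^d} |f(x+h) − f(x)|^p w(x) dx = 0; then F is sequentially compact in L^p(w), i.e. every sequence in F has a subsequence that converges in the L^p(w) metric to an element of L^p(w). -/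

import Mathlib

open MeasureTheory Metric Filter ENNReal

noncomputable section

abbrev Ed (d : ℕ) := EuclideanSpace ℝ (Fin d)

/-- `V` belongs to the reverse Hölder class `B_q`: `V` is nonnegative, locally integrable,
and the reverse Hölder inequality with exponent `q` holds on every ball. -/
def ReverseHolderClass (d : ℕ) (V : Ed d → ℝ) (q : ℝ) : Prop :=
  (∀ x, 0 ≤ V x) ∧ LocallyIntegrable V volume ∧
    ∃ C : ℝ, 0 < C ∧ ∀ (x : Ed d) (r : ℝ), 0 < r →
      ((volume (ball x r)).toReal⁻¹ * ∫ y in ball x r, V y ^ q) ^ (1 / q) ≤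
        C * ((volume (ball x r)).toReal⁻¹ * ∫ y in ball x r, V y)

/-- The critical radius function `ρ(x)` associated with the potential `V`. -/
def critRad {d : ℕ} (V : Ed d → ℝ) (x : Ed d) : ℝ :=
  sSup {r : ℝ | 0 < r ∧ (∫ y in ball x r, V y) ≤ r ^ ((d : ℝ) - 2)}

/-- The auxiliary function `m_V = 1 / ρ`. -/
def mV {d : ℕ} (V : Ed d → ℝ) (x : Ed d) : ℝ := (critRad V x)⁻¹

/-- The factor `Ψ_θ(B)` of the ball with center `x₀` and radius `r`. -/
def psi {d : ℕ} (V : Ed d → ℝ) (θ : ℝ) (x₀ : Ed d) (r : ℝ) : ℝ :=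
  (1 + r * mV V x₀) ^ θ

/-- The weight class `A_p^{ρ,θ}` for `1 < p < ∞`. -/
def MemApRho (d : ℕ) (V : Ed d → ℝ) (θ p : ℝ) (w : Ed d → ℝ) : Prop :=
  (∀ x, 0 ≤ w x) ∧ LocallyIntegrable w volume ∧
    ∃ C : ℝ, 0 < C ∧ ∀ (x₀ : Ed d) (r : ℝ), 0 < r →
      ((psi V θ x₀ r * (volume (ball x₀ r)).toReal)⁻¹ * ∫ y in ball x₀ r, w y) *
        ((psi V θ x₀ r * (volume (ball x₀ r)).toReal)⁻¹ *
            ∫ y in ball x₀ r, w y ^ (-(1 / (p - 1)))) ^ (p - 1) ≤ C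

/-- The maximal operator `M_{V,η}` (built with the `Ψ_θ` factors), valued in `ℝ≥0∞`. -/
def maxV {d : ℕ} (V : Ed d → ℝ) (θ η : ℝ) (f : Ed d → ℝ) (x : Ed d) : ℝ≥0∞ :=
  ⨆ (x₀ : Ed d) (r : ℝ) (_ : 0 < r) (_ : x ∈ ball x₀ r),
    (ENNReal.ofReal (psi V θ x₀ r ^ η) * volume (ball x₀ r))⁻¹ *
      ∫⁻ y in ball x₀ r, ENNReal.ofReal ‖f y‖

/-- The weight class `A_1^{ρ,θ}`. -/
def MemA1Rho (d : ℕ) (V : Ed d → ℝ) (θ : ℝ) (w : Ed d → ℝ) : Prop :=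
  (∀ x, 0 ≤ w x) ∧ LocallyIntegrable w volume ∧
    ∃ C : ℝ, 0 < C ∧ ∀ᵐ x ∂volume, maxV V θ 1 w x ≤ ENNReal.ofReal (C * w x)

/-- The axis-parallel cube centered at `c` with side length `r`. -/
def cube {d : ℕ} (c : Ed d) (r : ℝ) : Set (Ed d) := {y | ∀ j, ‖y j - c j‖ ≤ r / 2}

/-- The set of normalized `BMO(ρ)`-averages of `b` over balls. -/
def bmoSet {d : ℕ} (V : Ed d → ℝ) (θ : ℝ) (b : Ed d → ℝ) : Set ℝ :=
  {s | ∃ (x₀ : Ed d) (r : ℝ), 0 < r ∧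
    s = (psi V θ x₀ r * (volume (ball x₀ r)).toReal)⁻¹ *
      ∫ x in ball x₀ r, ‖b x - (volume (ball x₀ r)).toReal⁻¹ * (∫ y in ball x₀ r, b y)‖}

/-- `b ∈ BMO(ρ)`. -/
def MemBMOrho {d : ℕ} (V : Ed d → ℝ) (θ : ℝ) (b : Ed d → ℝ) : Prop :=
  BddAbove (bmoSet V θ b)

/-- The `BMO(ρ)` norm of `b`. -/
def bmoNorm {d : ℕ} (V : Ed d → ℝ) (θ : ℝ) (b : Ed d → ℝ) : ℝ :=
  sSup (bmoSet V θ b)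

/-- `b ∈ CMO(ρ)`: `b` lies in the closure of `C_c^∞(ℝ^d)` in the `BMO(ρ)` norm. -/
def MemCMOrho {d : ℕ} (V : Ed d → ℝ) (θ : ℝ) (b : Ed d → ℝ) : Prop :=
  ∀ ε : ℝ, 0 < ε → ∃ φ : Ed d → ℝ, ContDiff ℝ (⊤ : ℕ∞) φ ∧ HasCompactSupport φ ∧
    MemBMOrho V θ (b - φ) ∧ bmoNorm V θ (b - φ) < ε

/-- The weighted `L^p(w)` (quasi-)norm, as an `ℝ≥0∞`-valued quantity. -/
def wLpNorm {d : ℕ} (w : Ed d → ℝ) (p : ℝ) (f : Ed d → ℝ) : ℝ≥0∞ :=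
  (∫⁻ x, ENNReal.ofReal ‖f x‖ ^ p * ENNReal.ofReal (w x)) ^ (1 / p)

/-- The (unweighted) `L^p` norm, as an `ℝ≥0∞`-valued quantity. -/
def LpNormV {d : ℕ} (p : ℝ) (f : Ed d → ℝ) : ℝ≥0∞ :=
  (∫⁻ x, ENNReal.ofReal ‖f x‖ ^ p) ^ (1 / p)

/-- The commutator `[b, T] f = b · T f − T (b f)`. -/
def commOp {d : ℕ} (b : Ed d → ℝ) (T : (Ed d → ℝ) → Ed d → ℝ) (f : Ed d → ℝ) : Ed d → ℝ :=
  fun x => b x * T f x - T (fun y => b y * f y) x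

/-- The maximal truncated singular integral associated with the kernel `K`. -/
def maxTrunc {d : ℕ} (K : Ed d → Ed d → ℝ) (f : Ed d → ℝ) (x : Ed d) : ℝ≥0∞ :=
  ⨆ (ε : ℝ) (_ : 0 < ε), ENNReal.ofReal ‖∫ y in {y : Ed d | ε < dist x y}, K x y * f y‖

/-!
Under the metric `∫ ‖f - g‖ ^ p w` for `p ≤ 1`, and its `p`-th root for `p ≥ 1`, the functions on
`ℝ^d` form a complete space for every `p > 0`, so it suffices to show that `F` is totally bounded.
Choose a large ball `K` outside which `F` is uniformly small, and let `κ` be a simple function that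
moves every point of `K` by less than `δ`. Averaging over `a` in the ball of radius `δ` about `0`
gives
`⨍_a ∫_K ‖f x - f (κ x + a)‖ ^ p w(x) dx ≤ 2 ^ d sup_{‖h‖ < 2δ} ∫ ‖f x - f (x + h)‖ ^ p w(x) dx`
by the substitution `h = κ x + a - x`. Hence some step function `x ↦ f (κ x + a)` on `K` is close
to `f`. These step functions are norm bounded and have finitely many coefficients, so they form a
totally bounded set. The average is taken in Lebesgue measure, and the weight enters only through
its local integrability.
-/

open scoped NNReal Topology

section TotallyBounded

variable {X : Type*} [PseudoEMetricSpace X]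

theorem totallyBounded_of_forall_exists_edist_le {s : Set X}
    (h : ∀ ε : ℝ≥0, 0 < ε → ∃ t : Set X, TotallyBounded t ∧ ∀ x ∈ s, ∃ y ∈ t, edist x y ≤ ε) :
    TotallyBounded s := by
  refine EMetric.totallyBounded_iff.2 fun ε hε ↦ ?_
  obtain ⟨δ, hδ, hδε⟩ := ENNReal.lt_iff_exists_nnreal_btwn.1 (ENNReal.half_pos hε.ne')
  obtain ⟨t, ht, hst⟩ := h δ (by exact_mod_cast hδ)
  obtain ⟨c, hc, htc⟩ := EMetric.totallyBounded_iff.1 ht (ε / 2) (ENNReal.half_pos hε.ne')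
  refine ⟨c, hc, fun x hx ↦ ?_⟩
  obtain ⟨y, hy, hxy⟩ := hst x hx
  obtain ⟨z, hz, hyz⟩ := Set.mem_iUnion₂.1 (htc hy)
  refine Set.mem_iUnion₂.2 ⟨z, hz, ?_⟩
  calc edist x z ≤ edist x y + edist y z := edist_triangle _ _ _
    _ < ε / 2 + ε / 2 := ENNReal.add_lt_add (hxy.trans_lt hδε) hyz
    _ = ε := ENNReal.add_halves ε

end TotallyBounded

section LpFSpace

variable {α G : Type*} [MeasurableSpace α] [NormedAddCommGroup G] {p : ℝ} {μ : Measure α}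

theorem ae_exists_tendsto_of_lintegral_le_geometric [CompleteSpace G] (hp : 0 < p)
    {u : ℕ → α → G} (hu : ∀ n, AEStronglyMeasurable (u n) μ)
    (hu_le : ∀ n, ∫⁻ x, ‖u n x - u (n + 1) x‖ₑ ^ p ∂μ ≤ (2⁻¹ ^ n) ^ (1 + p)) :
    ∀ᵐ x ∂μ, ∃ l, Tendsto (fun n ↦ u n x) atTop (𝓝 l) := by
  set jump : ℕ → Set α := fun n ↦ {x | (2⁻¹ ^ n) ^ p ≤ ‖u n x - u (n + 1) x‖ₑ ^ p}
  have measure_jump_le (n : ℕ) : μ (jump n) ≤ 2⁻¹ ^ n := by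
    have h2 : (2⁻¹ ^ n : ℝ≥0∞) ≠ 0 := by simp
    have h2' : (2⁻¹ ^ n : ℝ≥0∞) ≠ ⊤ := by finiteness
    have hmeas : AEMeasurable (fun x ↦ ‖u n x - u (n + 1) x‖ₑ ^ p) μ :=
      ((hu n).sub (hu (n + 1))).enorm.pow_const p
    refine (meas_ge_le_lintegral_div hmeas (by simp [h2]) (by finiteness)).trans ?_
    refine ENNReal.div_le_of_le_mul ((hu_le n).trans_eq ?_)
    rw [ENNReal.rpow_add _ _ h2 h2', ENNReal.rpow_one]
  have summable_jump : ∑' n, μ (jump n) ≠ ⊤ :=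
    ne_top_of_le_ne_top (by simp [ENNReal.tsum_geometric]) (ENNReal.tsum_le_tsum measure_jump_le)
  filter_upwards [ae_eventually_notMem summable_jump] with x hx
  obtain ⟨N, hN⟩ := eventually_atTop.1 hx
  refine cauchySeq_tendsto_of_complete ((cauchySeq_shift N).1 ?_)
  refine cauchySeq_of_edist_le_geometric_two 1 one_ne_top fun n ↦ ?_
  have hlt : ‖u (n + N) x - u (n + N + 1) x‖ₑ < 2⁻¹ ^ (n + N) :=
    (ENNReal.rpow_lt_rpow_iff hp).1 (not_le.1 (hN (n + N) (Nat.le_add_left N n)))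
  calc edist (u (n + N) x) (u (n + 1 + N) x)
      = ‖u (n + N) x - u (n + N + 1) x‖ₑ := by rw [edist_eq_enorm_sub, Nat.add_right_comm]
    _ ≤ 2⁻¹ ^ (n + N) := hlt.le
    _ ≤ 2⁻¹ ^ n := pow_le_pow_right_of_le_one' (by simp) (Nat.le_add_right n N)
    _ = 1 / 2 ^ n := by rw [one_div, ENNReal.inv_pow]

theorem lintegral_enorm_sub_rpow_le_liminf {u : ℕ → α → G} {f g : α → G}
    (hu : ∀ n, AEStronglyMeasurable (u n) μ) (hf : AEStronglyMeasurable f μ)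
    (hlim : ∀ᵐ x ∂μ, Tendsto (fun n ↦ u n x) atTop (𝓝 (g x))) :
    ∫⁻ x, ‖f x - g x‖ₑ ^ p ∂μ ≤ liminf (fun n ↦ ∫⁻ x, ‖f x - u n x‖ₑ ^ p ∂μ) atTop := by
  calc ∫⁻ x, ‖f x - g x‖ₑ ^ p ∂μ
      = ∫⁻ x, liminf (fun n ↦ ‖f x - u n x‖ₑ ^ p) atTop ∂μ := by
        refine lintegral_congr_ae (hlim.mono fun x hx ↦ ?_)
        exact ((tendsto_const_nhds.sub hx).enorm.ennrpow_const p).liminf_eq.symm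
    _ ≤ liminf (fun n ↦ ∫⁻ x, ‖f x - u n x‖ₑ ^ p ∂μ) atTop :=
        lintegral_liminf_le' fun n ↦ (hf.sub (hu n)).enorm.pow_const p

/-- The F-norm of `L^p(μ)`: it is `‖f‖_p` for `1 ≤ p` and `‖f‖_p ^ p` for `p ≤ 1`, hence
subadditive for every `0 < p`. -/
def lpFNorm (p : ℝ) (μ : Measure α) (f : α → G) : ℝ≥0∞ :=
  (∫⁻ x, ‖f x‖ₑ ^ p ∂μ) ^ (max 1 p)⁻¹

theorem lpFNorm_add_le (hp : 0 ≤ p) {f g : α → G} (hf : AEStronglyMeasurable f μ)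
    (hg : AEStronglyMeasurable g μ) : lpFNorm p μ (f + g) ≤ lpFNorm p μ f + lpFNorm p μ g := by
  rcases le_total p 1 with hp1 | hp1
  · simp only [lpFNorm, max_eq_left hp1, inv_one, ENNReal.rpow_one]
    rw [← lintegral_add_left' (hf.enorm.pow_const p)]
    refine lintegral_mono fun x ↦ ?_
    exact (ENNReal.rpow_le_rpow (enorm_add_le _ _) hp).trans
      (ENNReal.rpow_add_le_add_rpow _ _ hp hp1)
  · simpa only [lpFNorm, max_eq_right hp1, eLpNorm', one_div] using eLpNorm'_add_le hf hg hp1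

/-- The a.e. strongly measurable functions `α → G` with the extended pseudodistance
`lpFNorm p μ (f - g)`. Functions of infinite `L^p` norm are allowed, functions that agree a.e. are
not identified, and the exponent `p` only selects the distance. -/
@[ext]
structure LpFSpace (G : Type*) [NormedAddCommGroup G] (p : ℝ) (μ : Measure α) where
  toFun : α → G
  aestronglyMeasurable : AEStronglyMeasurable toFun μ

namespace LpFSpace

instance : CoeFun (LpFSpace G p μ) fun _ ↦ α → G := ⟨toFun⟩

instance : Zero (LpFSpace G p μ) := ⟨⟨0, aestronglyMeasurable_zero⟩⟩

@[simp]
theorem coe_zero : ⇑(0 : LpFSpace G p μ) = 0 := rfl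

variable {β : Type*}

/-- The step function equal to `c ∘ κ` on the set `K` and to `0` outside. With `K` and `κ` fixed,
these functions are parametrized by the finitely many coefficients `c b`, `b ∈ κ.range`. -/
def step (p : ℝ) (μ : Measure α) {K : Set α} (hK : MeasurableSet K) (κ : SimpleFunc α β)
    (c : β → G) : LpFSpace G p μ :=
  ⟨K.indicator (κ.map c), (κ.map c).stronglyMeasurable.aestronglyMeasurable.indicator hK⟩

variable {K : Set α} (hK : MeasurableSet K) (κ : SimpleFunc α β)

theorem step_zero : step (G := G) p μ hK κ 0 = 0 := by
  ext x
  simp [step]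

theorem lintegral_enorm_sub_step_rpow (f : α → G) (c : β → G) :
    ∫⁻ x, ‖f x - step p μ hK κ c x‖ₑ ^ p ∂μ =
      (∫⁻ x in K, ‖f x - c (κ x)‖ₑ ^ p ∂μ) + ∫⁻ x in Kᶜ, ‖f x‖ₑ ^ p ∂μ := by
  rw [← lintegral_add_compl _ hK]
  congr 1
  · exact setLIntegral_congr_fun hK fun x hx ↦ by simp [step, hx]
  · exact setLIntegral_congr_fun hK.compl fun x hx ↦ by simp_all [step]

variable [Fact (0 < p)]

instance : PseudoEMetricSpace (LpFSpace G p μ) where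
  edist f g := lpFNorm p μ (f.1 - g.1)
  edist_self f := by
    simp [lpFNorm, ENNReal.zero_rpow_of_pos (Fact.out : 0 < p)]
  edist_comm f g := by
    simp only [lpFNorm, Pi.sub_apply, enorm_sub_rev]
  edist_triangle f g h := by
    rw [← sub_add_sub_cancel f.1 g.1 h.1]
    exact lpFNorm_add_le (Fact.out : 0 < p).le (f.2.sub g.2) (g.2.sub h.2)

theorem edist_eq (f g : LpFSpace G p μ) :
    edist f g = (∫⁻ x, ‖f x - g x‖ₑ ^ p ∂μ) ^ (max 1 p)⁻¹ := rfl

theorem edist_le_iff {f g : LpFSpace G p μ} {ε : ℝ≥0∞} :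
    edist f g ≤ ε ↔ ∫⁻ x, ‖f x - g x‖ₑ ^ p ∂μ ≤ ε ^ max 1 p :=
  ENNReal.rpow_inv_le_iff (by positivity)

theorem edist_lt_iff {f g : LpFSpace G p μ} {ε : ℝ≥0∞} :
    edist f g < ε ↔ ∫⁻ x, ‖f x - g x‖ₑ ^ p ∂μ < ε ^ max 1 p :=
  ENNReal.rpow_inv_lt_iff (by positivity)

theorem edist_lt_top_iff {f g : LpFSpace G p μ} :
    edist f g < ⊤ ↔ ∫⁻ x, ‖f x - g x‖ₑ ^ p ∂μ < ⊤ := by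
  rw [edist_lt_iff, ENNReal.top_rpow_of_pos (by positivity)]

theorem tendsto_iff {ι : Type*} {l : Filter ι} {u : ι → LpFSpace G p μ} {g : LpFSpace G p μ} :
    Tendsto u l (𝓝 g) ↔ Tendsto (fun i ↦ ∫⁻ x, ‖u i x - g x‖ₑ ^ p ∂μ) l (𝓝 0) := by
  have hmax : 0 < max 1 p := by positivity
  rw [tendsto_iff_edist_tendsto_0]
  constructor <;> intro h
  · simpa [edist_eq, hmax, hmax.ne'] using h.ennrpow_const (max 1 p)
  · simpa [edist_eq, hmax] using h.ennrpow_const (max 1 p)⁻¹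

instance [CompleteSpace G] : CompleteSpace (LpFSpace G p μ) := by
  have hp : 0 < p := Fact.out
  have hmax : 0 < max 1 p := by positivity
  refine EMetric.complete_of_convergent_controlled_sequences
    (fun n ↦ ((2⁻¹ ^ n) ^ (1 + p)) ^ (max 1 p)⁻¹) (fun n ↦ ?_) ?_
  · have h2 : (0 : ℝ≥0∞) < 2⁻¹ ^ n := ENNReal.pow_pos (by simp) n
    exact ENNReal.rpow_pos (ENNReal.rpow_pos h2 (by finiteness)) (by finiteness)
  intro u hu
  have hu_lintegral (N n m : ℕ) (hn : N ≤ n) (hm : N ≤ m) :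
      ∫⁻ x, ‖u n x - u m x‖ₑ ^ p ∂μ ≤ (2⁻¹ ^ N) ^ (1 + p) := by
    simpa [hmax.ne'] using edist_le_iff.1 (hu N n m hn hm).le
  obtain ⟨g, hg, hlim⟩ := exists_stronglyMeasurable_limit_of_tendsto_ae (fun n ↦ (u n).2)
    (ae_exists_tendsto_of_lintegral_le_geometric hp (fun n ↦ (u n).2) fun n ↦
      hu_lintegral n n (n + 1) le_rfl n.le_succ)
  refine ⟨⟨g, hg.aestronglyMeasurable⟩, tendsto_iff.2 ?_⟩
  refine tendsto_of_tendsto_of_tendsto_of_le_of_le tendsto_const_nhds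
    (h := fun n ↦ (2⁻¹ ^ n) ^ (1 + p)) ?_ (fun _ ↦ zero_le) fun n ↦ ?_
  · have h2 := ENNReal.tendsto_pow_atTop_nhds_zero_of_lt_one (r := 2⁻¹) (by simp)
    simpa [add_pos one_pos hp] using h2.ennrpow_const (1 + p)
  · refine (lintegral_enorm_sub_rpow_le_liminf (fun m ↦ (u m).2) (u n).2 hlim).trans
      (liminf_le_of_frequently_le' ?_)
    exact ((eventually_ge_atTop n).mono fun m hm ↦ hu_lintegral n n m le_rfl hm).frequently

theorem edist_step (c c' : β → G) :
    edist (step p μ hK κ c) (step p μ hK κ c') =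
      (∑ b ∈ κ.range, ‖c b - c' b‖ₑ ^ p * μ.restrict K (κ ⁻¹' {b})) ^ (max 1 p)⁻¹ := by
  have hp : 0 < p := Fact.out
  rw [edist_eq]
  congr 1
  calc ∫⁻ x, ‖step p μ hK κ c x - step p μ hK κ c' x‖ₑ ^ p ∂μ
      = ∫⁻ x, K.indicator (κ.map fun b ↦ ‖c b - c' b‖ₑ ^ p) x ∂μ := by
        refine lintegral_congr fun x ↦ ?_
        by_cases hx : x ∈ K <;> simp [step, hx, hp]
    _ = (κ.map fun b ↦ ‖c b - c' b‖ₑ ^ p).lintegral (μ.restrict K) := by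
        rw [lintegral_indicator hK, SimpleFunc.lintegral_eq_lintegral]
    _ = _ := SimpleFunc.map_lintegral _ _

theorem continuous_step (hμK : μ K ≠ ⊤) : Continuous (step (G := G) p μ hK κ) := by
  have hp : 0 < p := Fact.out
  have hmax : 0 < max 1 p := by positivity
  refine continuous_iff_continuousAt.2 fun c ↦ tendsto_iff_edist_tendsto_0.2 ?_
  have hterm (b : β) : Continuous fun c' : β → G ↦
      ‖c' b - c b‖ₑ ^ p * μ.restrict K (κ ⁻¹' {b}) := by
    have hfin : μ.restrict K (κ ⁻¹' {b}) ≠ ⊤ :=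
      ne_top_of_le_ne_top hμK ((measure_mono (Set.subset_univ _)).trans_eq (by simp))
    exact (ENNReal.continuous_mul_const hfin).comp (by fun_prop)
  simp only [edist_step]
  have hcont : Continuous fun c' : β → G ↦
      (∑ b ∈ κ.range, ‖c' b - c b‖ₑ ^ p * μ.restrict K (κ ⁻¹' {b})) ^ (max 1 p)⁻¹ :=
    ENNReal.continuous_rpow_const.comp (continuous_finsetSum _ fun b _ ↦ hterm b)
  simpa [hp, hmax] using hcont.tendsto c

variable {hK κ} in
theorem enorm_le_of_edist_step_zero_le {c : β → G} {M : ℝ≥0∞} (hM : M ≠ ⊤)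
    (hc : edist (step p μ hK κ c) 0 ≤ M) {b : β} (hb : μ.restrict K (κ ⁻¹' {b}) ≠ 0) :
    ‖c b‖ₑ ≤ (M ^ max 1 p / μ.restrict K (κ ⁻¹' {b})) ^ p⁻¹ := by
  have hp : 0 < p := Fact.out
  have hb_range : b ∈ κ.range := by
    contrapose! hb
    rw [(SimpleFunc.preimage_eq_empty_iff κ b).2 (by simpa using hb), measure_empty]
  rw [← step_zero hK κ, edist_step, ENNReal.rpow_inv_le_iff (by positivity)] at hc
  rw [ENNReal.le_rpow_inv_iff hp, ENNReal.le_div_iff_mul_le (.inl hb) (.inr (by finiteness))]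
  calc ‖c b‖ₑ ^ p * μ.restrict K (κ ⁻¹' {b})
      ≤ ∑ b ∈ κ.range, ‖c b‖ₑ ^ p * μ.restrict K (κ ⁻¹' {b}) :=
        Finset.single_le_sum (f := fun b ↦ ‖c b‖ₑ ^ p * μ.restrict K (κ ⁻¹' {b}))
          (fun _ _ ↦ zero_le) hb_range
    _ ≤ M ^ max 1 p := by simpa using hc

theorem totallyBounded_step [ProperSpace G] (hμK : μ K ≠ ⊤) {M : ℝ≥0∞} (hM : M ≠ ⊤) :
    TotallyBounded {g | ∃ c, g = step (G := G) p μ hK κ c ∧ edist g 0 ≤ M} := by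
  have hp : 0 < p := Fact.out
  set m : β → ℝ≥0∞ := fun b ↦ μ.restrict K (κ ⁻¹' {b})
  set r : β → ℝ≥0∞ := fun b ↦ (M ^ max 1 p / m b) ^ p⁻¹
  have compact_coeffs : IsCompact (Set.univ.pi fun b ↦ closedBall (0 : G) (r b).toReal) :=
    isCompact_univ_pi fun b ↦ isCompact_closedBall 0 _
  refine totallyBounded_of_forall_exists_edist_le fun ε _ ↦
    ⟨_, (compact_coeffs.image (continuous_step hK κ hμK)).totallyBounded, ?_⟩
  rintro _ ⟨c, rfl, hc⟩
  -- Coefficients on null level sets are not controlled by the norm, so they are replaced by `0`.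
  refine ⟨_, ⟨fun b ↦ if m b = 0 then 0 else c b, fun b _ ↦ ?_, rfl⟩, ?_⟩
  · by_cases hb : m b = 0
    · simp [hb]
    have hr : r b ≠ ⊤ := by finiteness
    simpa [hb] using ENNReal.toReal_mono hr (enorm_le_of_edist_step_zero_le hM hc hb)
  · refine (Eq.le ?_).trans zero_le
    rw [edist_step, Finset.sum_eq_zero fun b _ ↦ ?_, ENNReal.zero_rpow_of_pos (by positivity)]
    change _ * m b = 0
    by_cases hb : m b = 0 <;> simp [hb, hp]

end LpFSpace

end LpFSpace

theorem exists_simpleFunc_dist_lt {X : Type*} [PseudoMetricSpace X] [MeasurableSpace X]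
    [OpensMeasurableSpace X] [TopologicalSpace.SeparableSpace X] [Nonempty X] {K : Set X}
    (hK : IsCompact K) {δ : ℝ} (hδ : 0 < δ) :
    ∃ κ : SimpleFunc X X, ∀ x ∈ K, dist (κ x) x < δ := by
  have hcover : K ⊆ ⋃ n, ball (TopologicalSpace.denseSeq X n) δ := fun x _ ↦ by
    obtain ⟨n, hn⟩ := (TopologicalSpace.denseRange_denseSeq X).exists_dist_lt x hδ
    exact Set.mem_iUnion.2 ⟨n, hn⟩
  obtain ⟨t, ht⟩ := hK.elim_finite_subcover _ (fun _ ↦ isOpen_ball) hcover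
  refine ⟨SimpleFunc.nearestPt (TopologicalSpace.denseSeq X) (t.sup id), fun x hx ↦ ?_⟩
  obtain ⟨n, hn, hxn⟩ := Set.mem_iUnion₂.1 (ht hx)
  have hle := SimpleFunc.edist_nearestPt_le (TopologicalSpace.denseSeq X) x
    (Finset.le_sup (f := id) hn)
  exact edist_lt_ofReal.1 (hle.trans_lt (edist_lt_ofReal.2 (mem_ball'.1 hxn)))

section Translation

variable {E G : Type*} [NormedAddCommGroup E] [MeasurableSpace E] [BorelSpace E]
  [NormedAddCommGroup G] {μ ν : Measure E} {p : ℝ}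

theorem setLIntegral_ball_zero_comp_add [ν.IsAddLeftInvariant] (φ : E → ℝ≥0∞) (y : E) (r : ℝ) :
    ∫⁻ a in ball 0 r, φ (y + a) ∂ν = ∫⁻ z in ball y r, φ z ∂ν := by
  simpa [preimage_add_ball] using (measurePreserving_add_left ν y).setLIntegral_comp_preimage_emb
    (measurableEmbedding_addLeft y) φ (ball y r)

theorem aestronglyMeasurable_comp_add_prod {α : Type*} [MeasurableSpace α] {ρ : Measure α}
    [SecondCountableTopology E] [SFinite ρ] [SFinite ν] [ν.IsAddLeftInvariant] {f : E → G}
    (hf : AEStronglyMeasurable f ν) {θ : α → E} (hθ : Measurable θ) :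
    AEStronglyMeasurable (fun z : α × E ↦ f (θ z.1 + z.2)) (ρ.prod ν) := by
  have hskew : MeasurePreserving (fun z : α × E ↦ (z.1, θ z.1 + z.2)) (ρ.prod ν) (ρ.prod ν) :=
    (MeasurePreserving.id ρ).skew_product (g := fun x y ↦ θ x + y) (by fun_prop)
      (.of_forall fun x ↦ (measurePreserving_add_left ν (θ x)).map_eq)
  exact hf.comp_snd.comp_measurePreserving hskew

theorem aemeasurable_enorm_sub_comp_add_rpow [SecondCountableTopology E] [SFinite μ] [SFinite ν]
    [ν.IsAddLeftInvariant] {f : E → G} (hfν : AEStronglyMeasurable f ν)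
    (hfμ : AEStronglyMeasurable f μ) {θ : E → E} (hθ : Measurable θ) (s t : Set E) :
    AEMeasurable (fun z : E × E ↦ ‖f z.1 - f (θ z.1 + z.2)‖ₑ ^ p)
      ((μ.restrict s).prod (ν.restrict t)) := by
  have hsub : AEStronglyMeasurable (fun z : E × E ↦ f z.1 - f (θ z.1 + z.2)) (μ.prod ν) :=
    hfμ.comp_fst.sub (aestronglyMeasurable_comp_add_prod hfν hθ)
  rw [Measure.prod_restrict]
  exact (hsub.enorm.pow_const p).restrict

theorem setLIntegral_ball_setLIntegral_enorm_sub_comp_add_le [SecondCountableTopology E]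
    [SFinite μ] [SFinite ν] [ν.IsAddLeftInvariant] {f : E → G} (hfν : AEStronglyMeasurable f ν)
    (hfμ : AEStronglyMeasurable f μ) {K : Set E} (hK : MeasurableSet K) {κ : E → E}
    (hκ : Measurable κ) {δ : ℝ} (hκδ : ∀ x ∈ K, dist (κ x) x ≤ δ) {η : ℝ≥0∞}
    (hf : ∀ h ∈ ball (0 : E) (2 * δ), ∫⁻ x, ‖f (x + h) - f x‖ₑ ^ p ∂μ ≤ η) :
    ∫⁻ a in ball 0 δ, ∫⁻ x in K, ‖f x - f (κ x + a)‖ₑ ^ p ∂μ ∂ν ≤ η * ν (ball 0 (2 * δ)) := by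
  calc ∫⁻ a in ball 0 δ, ∫⁻ x in K, ‖f x - f (κ x + a)‖ₑ ^ p ∂μ ∂ν
      = ∫⁻ x in K, ∫⁻ a in ball 0 δ, ‖f x - f (κ x + a)‖ₑ ^ p ∂ν ∂μ :=
        (lintegral_lintegral_swap (aemeasurable_enorm_sub_comp_add_rpow hfν hfμ hκ _ _)).symm
    _ ≤ ∫⁻ x in K, ∫⁻ h in ball 0 (2 * δ), ‖f x - f (x + h)‖ₑ ^ p ∂ν ∂μ := by
        refine setLIntegral_mono' hK fun x hx ↦ ?_
        rw [setLIntegral_ball_zero_comp_add (fun z ↦ ‖f x - f z‖ₑ ^ p),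
          setLIntegral_ball_zero_comp_add (fun z ↦ ‖f x - f z‖ₑ ^ p)]
        exact lintegral_mono_set (ball_subset_ball' (by linarith [hκδ x hx]))
    _ = ∫⁻ h in ball 0 (2 * δ), ∫⁻ x in K, ‖f x - f (x + h)‖ₑ ^ p ∂μ ∂ν :=
        lintegral_lintegral_swap (aemeasurable_enorm_sub_comp_add_rpow hfν hfμ measurable_id _ _)
    _ ≤ ∫⁻ _ in ball 0 (2 * δ), η ∂ν := by
        refine setLIntegral_mono' measurableSet_ball fun h hh ↦ ?_
        simpa only [enorm_sub_rev] using (setLIntegral_le_lintegral K _).trans (hf h hh)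
    _ = η * ν (ball 0 (2 * δ)) := setLIntegral_const _ _

theorem exists_setLIntegral_enorm_sub_comp_add_le [NormedSpace ℝ E] [FiniteDimensional ℝ E]
    [SFinite μ] [ν.IsAddHaarMeasure] {f : E → G} (hfν : AEStronglyMeasurable f ν)
    (hfμ : AEStronglyMeasurable f μ) {K : Set E} (hK : MeasurableSet K) {κ : E → E}
    (hκ : Measurable κ) {δ : ℝ} (hδ : 0 < δ) (hκδ : ∀ x ∈ K, dist (κ x) x ≤ δ) {η : ℝ≥0∞}
    (hf : ∀ h ∈ ball (0 : E) (2 * δ), ∫⁻ x, ‖f (x + h) - f x‖ₑ ^ p ∂μ ≤ η) :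
    ∃ a, ∫⁻ x in K, ‖f x - f (κ x + a)‖ₑ ^ p ∂μ ≤ 2 ^ Module.finrank ℝ E * η := by
  have ball_ne_zero : ν (ball 0 δ) ≠ 0 := (measure_ball_pos ν 0 hδ).ne'
  have ball_two_mul : ν (ball 0 (2 * δ)) = 2 ^ Module.finrank ℝ E * ν (ball 0 δ) := by
    rw [Measure.addHaar_ball_mul_of_pos ν 0 two_pos, ENNReal.ofReal_pow two_pos.le,
      ENNReal.ofReal_ofNat]
  obtain ⟨a, -, ha⟩ := exists_le_setLAverage ball_ne_zero measure_ball_lt_top.ne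
    (aemeasurable_enorm_sub_comp_add_rpow (p := p) hfν hfμ hκ K (ball 0 δ)).lintegral_prod_left'
  refine ⟨a, ha.trans ?_⟩
  rw [setLAverage_eq]
  refine ENNReal.div_le_of_le_mul ?_
  refine (setLIntegral_ball_setLIntegral_enorm_sub_comp_add_le hfν hfμ hK hκ hκδ hf).trans_eq ?_
  rw [ball_two_mul]
  ring

end Translation

section FrechetKolmogorov

variable {E G : Type*} [NormedAddCommGroup E] [NormedSpace ℝ E] [FiniteDimensional ℝ E]
  [MeasurableSpace E] [BorelSpace E] [NormedAddCommGroup G] [ProperSpace G] {μ ν : Measure E}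
  [IsLocallyFiniteMeasure μ] [ν.IsAddHaarMeasure] {p : ℝ} {F : Set (E → G)}

theorem LpFSpace.totallyBounded_of_tendsto_zero [Fact (0 < p)]
    (hFmeas : ∀ f ∈ F, AEStronglyMeasurable f ν)
    {M : ℝ≥0∞} (hM : M < ⊤) (hFbdd : ∀ f ∈ F, ∫⁻ x, ‖f x‖ₑ ^ p ∂μ ≤ M)
    (hFvanish : Tendsto (fun N : ℝ ↦ ⨆ f ∈ F, ∫⁻ x in {x | N < ‖x‖}, ‖f x‖ₑ ^ p ∂μ) atTop (𝓝 0))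
    (hFequi : Tendsto (fun h ↦ ⨆ f ∈ F, ∫⁻ x, ‖f (x + h) - f x‖ₑ ^ p ∂μ) (𝓝 0) (𝓝 0)) :
    TotallyBounded {f : LpFSpace G p μ | ⇑f ∈ F} := by
  have hmax : 0 < max 1 p := by positivity
  refine totallyBounded_of_forall_exists_edist_le fun ε hε ↦ ?_
  set τ : ℝ≥0∞ := (ε : ℝ≥0∞) ^ max 1 p
  have hτ : 0 < τ := ENNReal.rpow_pos (by exact_mod_cast hε) (by finiteness)
  have hη : 0 < τ / 2 / 2 ^ Module.finrank ℝ E :=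
    ENNReal.div_pos (ENNReal.half_pos hτ.ne').ne' (by finiteness)
  obtain ⟨R, hR⟩ := (hFvanish.eventually_le_const (ENNReal.half_pos hτ.ne')).exists
  obtain ⟨δ, hδ, hball⟩ := Metric.eventually_nhds_iff_ball.1 (hFequi.eventually_le_const hη)
  have htail (f) (hf : f ∈ F) : ∫⁻ x in (closedBall 0 R)ᶜ, ‖f x‖ₑ ^ p ∂μ ≤ τ / 2 := by
    have hcompl : (closedBall (0 : E) R)ᶜ = {x | R < ‖x‖} := by ext; simp
    exact hcompl ▸ iSup₂_le_iff.1 hR f hf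
  have hequi (f) (hf : f ∈ F) (h) (hh : h ∈ ball (0 : E) (2 * (δ / 2))) :
      ∫⁻ x, ‖f (x + h) - f x‖ₑ ^ p ∂μ ≤ τ / 2 / 2 ^ Module.finrank ℝ E :=
    iSup₂_le_iff.1 (hball h (by rwa [mul_div_cancel₀ δ two_ne_zero] at hh)) f hf
  obtain ⟨κ, hκ⟩ := exists_simpleFunc_dist_lt (isCompact_closedBall (0 : E) R) (half_pos hδ)
  have hK : MeasurableSet (closedBall (0 : E) R) := measurableSet_closedBall
  refine ⟨_, totallyBounded_step hK κ measure_closedBall_lt_top.ne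
    (M := ε + M ^ (max 1 p)⁻¹) (by finiteness), fun f hf ↦ ?_⟩
  obtain ⟨a, ha⟩ := exists_setLIntegral_enorm_sub_comp_add_le (hFmeas f hf) f.2 hK κ.measurable
    (half_pos hδ) (fun x hx ↦ (hκ x hx).le) (hequi f hf)
  have edist_step_le : edist f (step p μ hK κ fun z ↦ f (z + a)) ≤ ε := by
    rw [edist_le_iff, lintegral_enorm_sub_step_rpow]
    exact (add_le_add (ha.trans ENNReal.mul_div_le) (htail f hf)).trans_eq (ENNReal.add_halves τ)
  refine ⟨_, ⟨_, rfl, ?_⟩, edist_step_le⟩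
  refine (edist_triangle _ f _).trans (add_le_add (by rwa [edist_comm]) ?_)
  rw [edist_le_iff, ENNReal.rpow_inv_rpow hmax.ne']
  simpa using hFbdd f hf

theorem exists_subseq_tendsto_lintegral_enorm_sub_rpow (hp : 0 < p) (hμν : μ ≪ ν)
    (hFmeas : ∀ f ∈ F, AEStronglyMeasurable f ν)
    {M : ℝ≥0∞} (hM : M < ⊤) (hFbdd : ∀ f ∈ F, ∫⁻ x, ‖f x‖ₑ ^ p ∂μ ≤ M)
    (hFvanish : Tendsto (fun N : ℝ ↦ ⨆ f ∈ F, ∫⁻ x in {x | N < ‖x‖}, ‖f x‖ₑ ^ p ∂μ) atTop (𝓝 0))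
    (hFequi : Tendsto (fun h ↦ ⨆ f ∈ F, ∫⁻ x, ‖f (x + h) - f x‖ₑ ^ p ∂μ) (𝓝 0) (𝓝 0))
    {u : ℕ → E → G} (hu : ∀ n, u n ∈ F) :
    ∃ (φ : ℕ → ℕ) (g : E → G), StrictMono φ ∧ StronglyMeasurable g ∧ ∫⁻ x, ‖g x‖ₑ ^ p ∂μ < ⊤ ∧
      Tendsto (fun n ↦ ∫⁻ x, ‖u (φ n) x - g x‖ₑ ^ p ∂μ) atTop (𝓝 0) := by
  have : Fact (0 < p) := ⟨hp⟩
  have compact_closure : IsCompact (closure {f : LpFSpace G p μ | ⇑f ∈ F}) :=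
    (LpFSpace.totallyBounded_of_tendsto_zero hFmeas hM hFbdd hFvanish
      hFequi).closure.isCompact_of_isClosed isClosed_closure
  set v : ℕ → LpFSpace G p μ := fun n ↦ ⟨u n, (hFmeas _ (hu n)).mono_ac hμν⟩
  obtain ⟨g, -, φ, hφ, hlim⟩ := compact_closure.tendsto_subseq (x := v) fun n ↦
    subset_closure (hu n)
  have hg : g =ᵐ[μ] g.2.mk g := g.2.ae_eq_mk
  refine ⟨φ, g.2.mk g, hφ, g.2.stronglyMeasurable_mk, ?_, ?_⟩
  · obtain ⟨n, hn⟩ := (hlim.eventually (Metric.eball_mem_nhds g zero_lt_one)).exists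
    have hgv : edist g (v (φ n)) < ⊤ := (edist_comm g _).trans_lt (hn.trans ENNReal.one_lt_top)
    have hv : edist (v (φ n)) 0 < ⊤ :=
      LpFSpace.edist_lt_top_iff.2 (by simpa using (hFbdd _ (hu (φ n))).trans_lt hM)
    have hg0 : ∫⁻ x, ‖g x‖ₑ ^ p ∂μ < ⊤ := by
      simpa using LpFSpace.edist_lt_top_iff.1
        ((edist_triangle g (v (φ n)) 0).trans_lt (ENNReal.add_lt_top.2 ⟨hgv, hv⟩))
    exact (lintegral_congr_ae (hg.fun_comp fun y ↦ ‖y‖ₑ ^ p)).symm.trans_lt hg0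
  · refine (LpFSpace.tendsto_iff.1 hlim).congr fun n ↦ lintegral_congr_ae (hg.mono fun x hx ↦ ?_)
    simp only [Function.comp_apply, hx, v]

end FrechetKolmogorov

section Weight

variable {E G : Type*} [NormedAddCommGroup G]

theorem isLocallyFiniteMeasure_withDensity_enorm [TopologicalSpace E] [MeasurableSpace E]
    [OpensMeasurableSpace E] {ν : Measure E} {w : E → G} (hw : LocallyIntegrable w ν) :
    IsLocallyFiniteMeasure (ν.withDensity fun x ↦ ‖w x‖ₑ) where
  finiteAtNhds x := by
    obtain ⟨s, hs, hws⟩ := hw x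
    obtain ⟨t, hts, ht, hxt⟩ := mem_nhds_iff.1 hs
    refine ⟨t, ht.mem_nhds hxt, ?_⟩
    rw [withDensity_apply _ ht.measurableSet]
    exact (hws.mono_set hts).hasFiniteIntegral

theorem lintegral_ofReal_norm_rpow_mul [MeasurableSpace E] {ν : Measure E} {w : E → ℝ}
    (hw0 : ∀ x, 0 ≤ w x) (hw : AEStronglyMeasurable w ν) {p : ℝ} (hp : 0 ≤ p) (f : E → G) :
    ∫⁻ x, ENNReal.ofReal (‖f x‖ ^ p * w x) ∂ν =
      ∫⁻ x, ‖f x‖ₑ ^ p ∂ν.withDensity fun x ↦ ‖w x‖ₑ := by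
  rw [lintegral_withDensity_eq_lintegral_mul_non_measurable₀ ν hw.enorm
    (.of_forall fun _ ↦ enorm_lt_top)]
  refine lintegral_congr fun x ↦ ?_
  rw [ENNReal.ofReal_mul (by positivity), ← ENNReal.ofReal_rpow_of_nonneg (norm_nonneg _) hp,
    ofReal_norm, ← Real.enorm_of_nonneg (hw0 x), mul_comm, Pi.mul_apply]

variable [NormedAddCommGroup E] [NormedSpace ℝ E] [FiniteDimensional ℝ E] [MeasurableSpace E]
  [BorelSpace E] [ProperSpace G]

theorem statement10_general (ν : Measure E) [ν.IsAddHaarMeasure] {w : E → ℝ}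
    (hw0 : ∀ x, 0 ≤ w x) (hwloc : LocallyIntegrable w ν) {p : ℝ} (hp : 0 < p) {F : Set (E → G)}
    (hFmeas : ∀ f ∈ F, AEStronglyMeasurable f ν)
    (hFbdd : ∃ M : ℝ≥0∞, M < ⊤ ∧ ∀ f ∈ F, ∫⁻ x, ENNReal.ofReal (‖f x‖ ^ p * w x) ∂ν ≤ M)
    (hFvanish : Tendsto (fun N : ℝ ↦ ⨆ f ∈ F, ∫⁻ x in {x | N < ‖x‖},
      ENNReal.ofReal (‖f x‖ ^ p * w x) ∂ν) atTop (𝓝 0))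
    (hFequi : Tendsto (fun h ↦ ⨆ f ∈ F, ∫⁻ x,
      ENNReal.ofReal (‖f (x + h) - f x‖ ^ p * w x) ∂ν) (𝓝 0) (𝓝 0))
    (u : ℕ → E → G) (hu : ∀ n, u n ∈ F) :
    ∃ (φ : ℕ → ℕ) (g : E → G), StrictMono φ ∧ AEStronglyMeasurable g ν ∧
      ∫⁻ x, ENNReal.ofReal (‖g x‖ ^ p * w x) ∂ν < ⊤ ∧
      Tendsto (fun n ↦ ∫⁻ x, ENNReal.ofReal (‖u (φ n) x - g x‖ ^ p * w x) ∂ν) atTop (𝓝 0) := by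
  have := isLocallyFiniteMeasure_withDensity_enorm hwloc
  have hw : AEStronglyMeasurable w ν := hwloc.aestronglyMeasurable
  have restrict_eq (N : ℝ) : (ν.restrict {x | N < ‖x‖}).withDensity (fun x ↦ ‖w x‖ₑ) =
      (ν.withDensity fun x ↦ ‖w x‖ₑ).restrict {x | N < ‖x‖} :=
    (restrict_withDensity (measurableSet_lt measurable_const measurable_norm) _).symm
  obtain ⟨M, hM, hFbdd⟩ := hFbdd
  simp only [lintegral_ofReal_norm_rpow_mul hw0 hw hp.le,
    lintegral_ofReal_norm_rpow_mul hw0 hw.restrict hp.le, restrict_eq] at hFbdd hFvanish hFequi ⊢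
  obtain ⟨φ, g, hφ, hg, hg_lt_top, hlim⟩ := exists_subseq_tendsto_lintegral_enorm_sub_rpow hp
    (withDensity_absolutelyContinuous ν _) hFmeas hM hFbdd hFvanish hFequi hu
  exact ⟨φ, g, hφ, hg.aestronglyMeasurable, hg_lt_top, hlim⟩

end Weight

/-- Weighted Fréchet–Kolmogorov theorem (Xue–Yabuta–Yan): boundedness, uniform vanishing at
infinity and uniform equicontinuity imply sequential compactness in `L^p(w)`. -/
theorem statement10 (d : ℕ) (hd : 1 ≤ d) (p₀ : ℝ) (hp₀ : 1 < p₀)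
    (w : Ed d → ℝ) (hw0 : ∀ x, 0 ≤ w x) (hwloc : LocallyIntegrable w volume)
    (hw'loc : LocallyIntegrable (fun x => w x ^ (-(1 / (p₀ - 1)))) volume)
    (p : ℝ) (hp : 0 < p) (F : Set (Ed d → ℝ))
    (hFmeas : ∀ f ∈ F, AEStronglyMeasurable f volume)
    (hFbdd : ∃ M : ℝ≥0∞, M < ⊤ ∧ ∀ f ∈ F,
      (∫⁻ x, ENNReal.ofReal (‖f x‖ ^ p * w x)) ≤ M)
    (hFvanish : Tendsto
      (fun N : ℝ => ⨆ f ∈ F, ∫⁻ x in {x : Ed d | N < ‖x‖},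
        ENNReal.ofReal (‖f x‖ ^ p * w x)) atTop (nhds 0))
    (hFequi : Tendsto
      (fun h : Ed d => ⨆ f ∈ F, ∫⁻ x,
        ENNReal.ofReal (‖f (x + h) - f x‖ ^ p * w x)) (nhds 0) (nhds 0)) :
    ∀ u : ℕ → Ed d → ℝ, (∀ n, u n ∈ F) →
      ∃ (φ : ℕ → ℕ) (g : Ed d → ℝ), StrictMono φ ∧
        AEStronglyMeasurable g volume ∧
        (∫⁻ x, ENNReal.ofReal (‖g x‖ ^ p * w x)) < ⊤ ∧
        Tendsto (fun n => ∫⁻ x, ENNReal.ofReal (‖u (φ n) x - g x‖ ^ p * w x))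
          atTop (nhds 0) :=
  statement10_general volume hw0 hwloc hp hFmeas hFbdd hFvanish hFequi
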